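/- arXiv:2207.13935 — 2 statements merged into one kernel-verified Lean document; each statement's English description precedes it below -/
import Mathlib

section
/- Let φ : F → G be a morphism of deformation functors over Art_K. Then there exists a universal relative obstruction theory for φ, and it is unique up to isomorphism of relative obstruction theories. -/
open CategoryTheory

universe u

/-- The category `Art_K` of commutative local Artinian `K`-algebras with residue field `K`. -/
structure ArtinAlg (K : Type u) [Field K] : Type (u + 1) where
  carrier : Type u
  [commRing : CommRing carrier]
  [algebra : Algebra K carrier]
  [artinian : IsArtinianRing carrier]
  [localRing : IsLocalRing carrier]
  residue_bij : Function.Bijective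
    ((IsLocalRing.residue carrier).comp (algebraMap K carrier))

attribute [instance] ArtinAlg.commRing ArtinAlg.algebra ArtinAlg.artinian ArtinAlg.localRing

instance (K : Type u) [Field K] : CoeSort (ArtinAlg K) (Type u) :=
  ⟨ArtinAlg.carrier⟩

instance (K : Type u) [Field K] : Category (ArtinAlg K) where
  Hom A B := A.carrier →ₐ[K] B.carrier
  id A := AlgHom.id K A.carrier
  comp f g := g.comp f

/-- Morphisms in `Art_K` are `K`-algebra homomorphisms. -/
def ArtinAlg.Hom.toAlgHom {K : Type u} [Field K] {A B : ArtinAlg K} (f : A ⟶ B) :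
    A.carrier →ₐ[K] B.carrier := f

instance {K : Type u} [Field K] {A B : ArtinAlg K} : FunLike (A ⟶ B) A B :=
  inferInstanceAs (FunLike (A.carrier →ₐ[K] B.carrier) A B)

instance {K : Type u} [Field K] {A B : ArtinAlg K} : AlgHomClass (A ⟶ B) K A B :=
  inferInstanceAs (AlgHomClass (A.carrier →ₐ[K] B.carrier) K A B)

/-- The field `K` itself, as the (terminal/initial) object of `Art_K`. -/
def ArtinAlg.self (K : Type u) [Field K] : ArtinAlg K where
  carrier := K
  residue_bij := by
    constructor
    · exact RingHom.injective _
    · intro y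
      obtain ⟨x, hx⟩ := Ideal.Quotient.mk_surjective (I := IsLocalRing.maximalIdeal K) y
      exact ⟨x, hx⟩

/-- A functor of Artin rings: a covariant functor `F : Art_K ⥤ Set` with `F(K)` a one-point
set. -/
def IsFunctorOfArtinRings {K : Type u} [Field K] (F : ArtinAlg K ⥤ Type u) : Prop :=
  Nonempty (F.obj (ArtinAlg.self K)) ∧ Subsingleton (F.obj (ArtinAlg.self K))

/-- Smoothness of a functor of Artin rings: `F(B) → F(A)` is surjective for every surjection
`B → A` in `Art_K`. -/
def IsSmoothFunctor {K : Type u} [Field K] (F : ArtinAlg K ⥤ Type u) : Prop :=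
  ∀ (B A : ArtinAlg K) (f : B ⟶ A), Function.Surjective f → Function.Surjective (F.map f)

/-- Smoothness of a morphism of functors of Artin rings: for every surjection `B → A` in
`Art_K` the induced map `F(B) → G(B) ×_{G(A)} F(A)` is surjective. -/
def IsSmoothMorphism {K : Type u} [Field K] {F G : ArtinAlg K ⥤ Type u} (φ : F ⟶ G) : Prop :=
  ∀ (B A : ArtinAlg K) (f : B ⟶ A), Function.Surjective f →
    ∀ (gb : G.obj B) (fa : F.obj A), G.map f gb = φ.app A fa →
      ∃ fb : F.obj B, φ.app B fb = gb ∧ F.map f fb = fa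
/-- A small extension `e : 0 → J → B → A → 0` in `Art_K`: a surjection `π : B → A` whose
kernel `J` is annihilated by the maximal ideal `m_B`. -/
structure SmallExtension (K : Type u) [Field K] where
  B : ArtinAlg K
  A : ArtinAlg K
  π : B ⟶ A
  surj : Function.Surjective π
  small : ∀ x : B, π x = 0 → ∀ y ∈ IsLocalRing.maximalIdeal B.carrier, y * x = 0

/-- The kernel `J` of a small extension, as a `K`-vector space. -/
def SmallExtension.J {K : Type u} [Field K] (e : SmallExtension K) :
    Submodule K e.B.carrier :=
  Submodule.restrictScalars K (RingHom.ker (ArtinAlg.Hom.toAlgHom e.π).toRingHom)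

/-- The map induced on the kernels by a morphism of small extensions. -/
def SmallExtension.kerMap {K : Type u} [Field K] {e₁ e₂ : SmallExtension K}
    (αB : e₁.B ⟶ e₂.B) (αA : e₁.A ⟶ e₂.A) (hc : αB ≫ e₂.π = e₁.π ≫ αA) :
    e₁.J →ₗ[K] e₂.J where
  toFun x := ⟨αB x.1, by
    have hx : e₁.π x.1 = 0 := by
      have hx0 := x.2
      simp only [SmallExtension.J, Submodule.restrictScalars_mem, RingHom.mem_ker] at hx0
      exact hx0
    have h' : e₂.π (αB x.1) = αA (e₁.π x.1) := DFunLike.congr_fun hc x.1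
    simp only [SmallExtension.J, Submodule.restrictScalars_mem, RingHom.mem_ker]
    show e₂.π (αB x.1) = 0
    rw [h', hx, map_zero]⟩
  map_add' x y := by
    ext
    exact map_add (ArtinAlg.Hom.toAlgHom αB) x.1 y.1
  map_smul' c x := by
    ext
    exact map_smul (ArtinAlg.Hom.toAlgHom αB).toLinearMap c x.1

/-- An obstruction theory `(V, v_e)` for a functor of Artin rings `F`. -/
structure ObstructionTheory {K : Type u} [Field K] (F : ArtinAlg K ⥤ Type u) :
    Type (u + 1) where
  V : Type u
  [addCommGroup : AddCommGroup V]
  [module : Module K V]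
  ob : ∀ e : SmallExtension K, F.obj e.A → TensorProduct K V e.J
  ob_eq_zero_of_lifts : ∀ (e : SmallExtension K) (a : F.obj e.A),
    (∃ b : F.obj e.B, F.map e.π b = a) → ob e a = 0
  base_change : ∀ (e₁ e₂ : SmallExtension K) (αB : e₁.B ⟶ e₂.B) (αA : e₁.A ⟶ e₂.A)
    (hc : αB ≫ e₂.π = e₁.π ≫ αA) (a : F.obj e₁.A),
    ob e₂ (F.map αA a) = LinearMap.lTensor V (SmallExtension.kerMap αB αA hc) (ob e₁ a)

attribute [instance] ObstructionTheory.addCommGroup ObstructionTheory.module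

/-- Completeness of an obstruction theory: an element lifts iff its obstruction vanishes. -/
def ObstructionTheory.Complete {K : Type u} [Field K] {F : ArtinAlg K ⥤ Type u}
    (OT : ObstructionTheory F) : Prop :=
  ∀ (e : SmallExtension K) (a : F.obj e.A), OT.ob e a = 0 → ∃ b : F.obj e.B, F.map e.π b = a
/-- `(D, p, q)` realizes the fiber product `B ×_A C` in `Art_K` (stated concretely on
underlying algebras). -/
structure IsFiberProductCone {K : Type u} [Field K] {A B C D : ArtinAlg K}
    (f : B ⟶ A) (g : C ⟶ A) (p : D ⟶ B) (q : D ⟶ C) : Prop where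
  comm : ∀ d : D, f (p d) = g (q d)
  inj : ∀ d₁ d₂ : D, p d₁ = p d₂ → q d₁ = q d₂ → d₁ = d₂
  surj : ∀ (b : B) (c : C), f b = g c → ∃ d : D, p d = b ∧ q d = c

/-- A deformation functor: a functor of Artin rings such that the natural map
`η : F(B ×_A C) → F(B) ×_{F(A)} F(C)` is surjective whenever `B → A` is surjective, and
bijective whenever `A = K`. -/
structure IsDeformationFunctor {K : Type u} [Field K] (F : ArtinAlg K ⥤ Type u) : Prop where
  nonempty_pt : Nonempty (F.obj (ArtinAlg.self K))
  subsingleton_pt : Subsingleton (F.obj (ArtinAlg.self K))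
  eta_surjective : ∀ {A B C D : ArtinAlg K} (f : B ⟶ A) (g : C ⟶ A) (p : D ⟶ B) (q : D ⟶ C),
    IsFiberProductCone f g p q → Function.Surjective f →
    ∀ (x : F.obj B) (y : F.obj C), F.map f x = F.map g y →
      ∃ d : F.obj D, F.map p d = x ∧ F.map q d = y
  eta_bijective : ∀ {B C D : ArtinAlg K} (f : B ⟶ ArtinAlg.self K)
    (g : C ⟶ ArtinAlg.self K) (p : D ⟶ B) (q : D ⟶ C),
    IsFiberProductCone f g p q →
    ∀ (x : F.obj B) (y : F.obj C), F.map f x = F.map g y →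
      ∃! d : F.obj D, F.map p d = x ∧ F.map q d = y
lemma SmallExtension.rel_compat {K : Type u} [Field K] {F G : ArtinAlg K ⥤ Type u}
    (φ : F ⟶ G) {e₁ e₂ : SmallExtension K} (αB : e₁.B ⟶ e₂.B) (αA : e₁.A ⟶ e₂.A)
    (hc : αB ≫ e₂.π = e₁.π ≫ αA) (a : F.obj e₁.A) (β : G.obj e₁.B)
    (h : G.map e₁.π β = φ.app e₁.A a) :
    G.map e₂.π (G.map αB β) = φ.app e₂.A (F.map αA a) := by
  have h1 : G.map e₂.π (G.map αB β) = G.map αA (G.map e₁.π β) := by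
    rw [← FunctorToTypes.map_comp_apply, ← FunctorToTypes.map_comp_apply, hc]
  rw [h1, h]
  exact (NatTrans.naturality_apply φ αA a).symm

/-- A relative obstruction theory `(V, v_e)` for a morphism `φ : F → G` of functors of Artin
rings: for every small extension `e : 0 → J → B → A → 0`, a map
`v_e : F(A) ×_{G(A)} G(B) → V ⊗_K J` vanishing on pairs that lift to `F(B)` and compatible
with base change along morphisms of small extensions. -/
structure RelObstructionTheory {K : Type u} [Field K] {F G : ArtinAlg K ⥤ Type u}
    (φ : F ⟶ G) : Type (u + 1) where
  V : Type u
  [addCommGroup : AddCommGroup V]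
  [module : Module K V]
  ob : ∀ (e : SmallExtension K) (a : F.obj e.A) (β : G.obj e.B),
    G.map e.π β = φ.app e.A a → TensorProduct K V e.J
  ob_eq_zero_of_lifts : ∀ (e : SmallExtension K) (a : F.obj e.A) (β : G.obj e.B)
    (h : G.map e.π β = φ.app e.A a),
    (∃ b : F.obj e.B, F.map e.π b = a ∧ φ.app e.B b = β) → ob e a β h = 0
  base_change : ∀ (e₁ e₂ : SmallExtension K) (αB : e₁.B ⟶ e₂.B) (αA : e₁.A ⟶ e₂.A)
    (hc : αB ≫ e₂.π = e₁.π ≫ αA) (a : F.obj e₁.A) (β : G.obj e₁.B)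
    (h : G.map e₁.π β = φ.app e₁.A a),
    ob e₂ (F.map αA a) (G.map αB β) (SmallExtension.rel_compat φ αB αA hc a β h) =
      LinearMap.lTensor V (SmallExtension.kerMap αB αA hc) (ob e₁ a β h)

attribute [instance] RelObstructionTheory.addCommGroup RelObstructionTheory.module

/-- Completeness of a relative obstruction theory. -/
def RelObstructionTheory.Complete {K : Type u} [Field K] {F G : ArtinAlg K ⥤ Type u}
    {φ : F ⟶ G} (ROT : RelObstructionTheory φ) : Prop :=
  ∀ (e : SmallExtension K) (a : F.obj e.A) (β : G.obj e.B)
    (h : G.map e.π β = φ.app e.A a), ROT.ob e a β h = 0 →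
    ∃ b : F.obj e.B, F.map e.π b = a ∧ φ.app e.B b = β

/-- A morphism of relative obstruction theories `(V, v_e) → (W, w_e)` for `φ`: a linear map
`ψ : V → W` with `w_e = (ψ ⊗ id_J) ∘ v_e` for every small extension `e`. -/
def RelObstructionTheory.IsMorphism {K : Type u} [Field K] {F G : ArtinAlg K ⥤ Type u}
    {φ : F ⟶ G} (ROT ROT' : RelObstructionTheory φ) (ψ : ROT.V →ₗ[K] ROT'.V) : Prop :=
  ∀ (e : SmallExtension K) (a : F.obj e.A) (β : G.obj e.B)
    (h : G.map e.π β = φ.app e.A a),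
    ROT'.ob e a β h = LinearMap.rTensor (↥e.J) ψ (ROT.ob e a β h)

/-- A relative obstruction theory is universal if it admits a unique morphism to every
relative obstruction theory for `φ`. -/
def RelObstructionTheory.IsUniversal {K : Type u} [Field K] {F G : ArtinAlg K ⥤ Type u}
    {φ : F ⟶ G} (ROT : RelObstructionTheory φ) : Prop :=
  ∀ ROT' : RelObstructionTheory φ,
    ∃! ψ : ROT.V →ₗ[K] ROT'.V, RelObstructionTheory.IsMorphism ROT ROT' ψ

namespace ArtinAlg

variable {K : Type u} [Field K]

/-- Every element of `A` is a scalar up to a non-unit. -/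
lemma exists_sub_algebraMap_mem (A : ArtinAlg K) (x : A) :
    ∃ c : K, x - algebraMap K A c ∈ IsLocalRing.maximalIdeal A.carrier := by
  obtain ⟨c, hc⟩ := A.residue_bij.2 (IsLocalRing.residue A.carrier x)
  refine ⟨c, ?_⟩
  rw [← IsLocalRing.residue_eq_zero_iff, map_sub, sub_eq_zero]
  exact hc.symm

instance finite (A : ArtinAlg K) : Module.Finite K A.carrier := by
  have : Module.Finite K (A.carrier ⧸ Ring.jacobson A.carrier) := by
    refine Module.Finite.of_surjective
      (Algebra.linearMap K (A.carrier ⧸ Ring.jacobson A.carrier)) fun y => ?_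
    obtain ⟨x, rfl⟩ := Ideal.Quotient.mk_surjective y
    obtain ⟨c, hc⟩ := A.exists_sub_algebraMap_mem x
    refine ⟨c, ?_⟩
    rw [← IsLocalRing.ringJacobson_eq_maximalIdeal] at hc
    exact (Ideal.Quotient.eq.2 hc).symm
  exact IsSemiprimaryRing.finite_of_isArtinian K A.carrier A.carrier

/-- Transport of the `ArtinAlg` structure along an isomorphism of algebras. -/
def ofAlgEquiv (A : ArtinAlg K) {R : Type u} [CommRing R] [Algebra K R]
    (f : A.carrier ≃ₐ[K] R) : ArtinAlg K :=
  haveI : IsLocalRing R := f.toRingEquiv.isLocalRing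
  { carrier := R
    artinian := f.surjective.isArtinianRing
    residue_bij := by
      refine ⟨RingHom.injective _, fun y => ?_⟩
      obtain ⟨x, rfl⟩ := IsLocalRing.residue_surjective y
      obtain ⟨c, hc⟩ := A.exists_sub_algebraMap_mem (f.symm x)
      refine ⟨c, ?_⟩
      rw [RingHom.comp_apply, eq_comm, ← sub_eq_zero, ← map_sub,
        IsLocalRing.residue_eq_zero_iff, IsLocalRing.mem_maximalIdeal, mem_nonunits_iff]
      rw [IsLocalRing.mem_maximalIdeal, mem_nonunits_iff] at hc
      intro hu
      apply hc
      simpa using hu.map f.symm }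

variable (K) in
/-- A presentation of an object of `Art_K` as a quotient of a polynomial ring. In contrast to
`ArtinAlg K`, presentations form a type in the universe of `K`. -/
structure Presentation : Type u where
  n : ℕ
  I : Ideal (MvPolynomial (Fin n) K)
  artinian : IsArtinianRing (MvPolynomial (Fin n) K ⧸ I)
  localRing : IsLocalRing (MvPolynomial (Fin n) K ⧸ I)
  residue_bij : Function.Bijective ((IsLocalRing.residue (MvPolynomial (Fin n) K ⧸ I)).comp
    (algebraMap K (MvPolynomial (Fin n) K ⧸ I)))

/-- The algebra given by a presentation. -/
noncomputable def Presentation.toArtinAlg (P : Presentation K) : ArtinAlg K :=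
  haveI := P.artinian
  haveI := P.localRing
  { carrier := MvPolynomial (Fin P.n) K ⧸ P.I
    residue_bij := P.residue_bij }

lemma exists_presentation (A : ArtinAlg K) :
    ∃ P : Presentation K, Nonempty (A ≅ P.toArtinAlg) := by
  obtain ⟨n, f, hf⟩ := Algebra.FiniteType.iff_quotient_mvPolynomial''.1
    (inferInstance : Algebra.FiniteType K A.carrier)
  let g := (Ideal.quotientKerAlgEquivOfSurjective hf).symm
  let R := A.ofAlgEquiv g
  exact ⟨⟨n, RingHom.ker f, R.artinian, R.localRing, R.residue_bij⟩,
    ⟨{ hom := g.toAlgHom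
       inv := g.symm.toAlgHom
       hom_inv_id := AlgHom.ext g.symm_apply_apply
       inv_hom_id := AlgHom.ext g.apply_symm_apply }⟩⟩

end ArtinAlg

namespace SmallExtension

variable {K : Type u} [Field K]

instance finite_J (e : SmallExtension K) : Module.Finite K e.J :=
  inferInstanceAs (Module.Finite K (Submodule.restrictScalars K _ : Submodule K e.B.carrier))

/-- Transport of a small extension along isomorphisms of its two algebras. -/
def ofIso (e : SmallExtension K) {B' A' : ArtinAlg K} (iB : e.B ≅ B') (iA : e.A ≅ A') :
    SmallExtension K where
  B := B'
  A := A'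
  π := iB.inv ≫ e.π ≫ iA.hom
  surj y := by
    obtain ⟨b, hb⟩ := e.surj (iA.inv y)
    refine ⟨iB.hom b, ?_⟩
    have h1 : iB.inv (iB.hom b) = b := DFunLike.congr_fun iB.hom_inv_id b
    have h2 : iA.hom (iA.inv y) = y := DFunLike.congr_fun iA.inv_hom_id y
    change iA.hom (e.π (iB.inv (iB.hom b))) = y
    rw [h1, hb, h2]
  small x hx y hy := by
    have h1 (z) : iB.hom (iB.inv z) = z := DFunLike.congr_fun iB.inv_hom_id z
    have h2 (z) : iA.inv (iA.hom z) = z := DFunLike.congr_fun iA.hom_inv_id z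
    have hx' : e.π (iB.inv x) = 0 := by
      have h3 : iA.hom (e.π (iB.inv x)) = 0 := hx
      rw [← h2 (e.π (iB.inv x)), h3, map_zero]
    have hy' : iB.inv y ∈ IsLocalRing.maximalIdeal e.B.carrier := by
      rw [IsLocalRing.mem_maximalIdeal, mem_nonunits_iff] at hy ⊢
      intro hu
      apply hy
      simpa [h1] using hu.map iB.hom
    rw [← h1 (y * x), map_mul, e.small _ hx' _ hy', map_zero]

end SmallExtension

namespace RelObstructionTheory

open TensorProduct

section Contraction

variable {K V W J J' : Type*} [Field K] [AddCommGroup V] [Module K V] [AddCommGroup W]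
  [Module K W] [AddCommGroup J] [Module K J] [AddCommGroup J'] [Module K J']

/-- Contraction of an element of `V ⊗ J` with a linear form on `J`. -/
noncomputable def contract : Module.Dual K J →ₗ[K] V ⊗[K] J →ₗ[K] V :=
  (LinearMap.llcomp K _ _ _ (TensorProduct.rid K V).toLinearMap).comp
    (LinearMap.lTensorHom V)

@[simp]
lemma contract_tmul (l : Module.Dual K J) (v : V) (x : J) : contract l (v ⊗ₜ[K] x) = l x • v := by
  simp [contract]

lemma contract_lTensor (l : Module.Dual K J') (f : J →ₗ[K] J') (t : V ⊗[K] J) :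
    contract l (LinearMap.lTensor V f t) = contract (l.comp f) t := by
  induction t with
  | zero => simp
  | tmul v x => simp
  | add s t hs ht => simp [hs, ht]

lemma contract_rTensor (l : Module.Dual K J) (f : V →ₗ[K] W) (t : V ⊗[K] J) :
    contract l (LinearMap.rTensor J f t) = f (contract l t) := by
  induction t with
  | zero => simp
  | tmul v x => simp
  | add s t hs ht => simp [hs, ht]

variable [Module.Finite K J]

/-- The element of `V ⊗ J` with prescribed contractions. -/
noncomputable def ofContractions (f : Module.Dual K J →ₗ[K] V) : V ⊗[K] J :=
  ∑ i, f ((Module.finBasis K J).coord i) ⊗ₜ[K] Module.finBasis K J i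

lemma ofContractions_contract (t : V ⊗[K] J) : ofContractions (contract.flip t) = t := by
  induction t with
  | zero => simp [ofContractions]
  | tmul v x =>
    simp only [ofContractions, LinearMap.flip_apply, contract_tmul, TensorProduct.smul_tmul]
    rw [← TensorProduct.tmul_sum]
    congr 1
    exact (Module.finBasis K J).sum_repr x
  | add s t hs ht =>
    conv_rhs => rw [← hs, ← ht]
    simp [ofContractions, TensorProduct.add_tmul, Finset.sum_add_distrib]

lemma contract_ofContractions (l : Module.Dual K J) (f : Module.Dual K J →ₗ[K] V) :
    contract l (ofContractions f) = f l := by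
  conv_rhs => rw [← (Module.finBasis K J).sum_dual_apply_smul_coord l]
  simp only [ofContractions, map_sum, contract_tmul, map_smul]

lemma contract_ext {s t : V ⊗[K] J} (h : ∀ l : Module.Dual K J, contract l s = contract l t) :
    s = t := by
  rw [← ofContractions_contract s, ← ofContractions_contract t]
  exact congrArg ofContractions (LinearMap.ext h)

end Contraction

variable {K : Type u} [Field K] {F G : ArtinAlg K ⥤ Type u}

/-- A lifting problem for `φ`: a small extension together with an element of
`F(A) ×_{G(A)} G(B)`. -/
structure LiftingProblem (φ : F ⟶ G) : Type (u + 1) where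
  e : SmallExtension K
  a : F.obj e.A
  β : G.obj e.B
  h : G.map e.π β = φ.app e.A a

variable (φ : F ⟶ G)

/-- Formal contractions of obstructions: a lifting problem and a linear form on the kernel. -/
abbrev FormalContraction : Type (u + 1) := Σ d : LiftingProblem φ, Module.Dual K d.e.J

variable {φ} in
/-- The image of a lifting problem under a morphism of small extensions. -/
def LiftingProblem.push (d : LiftingProblem φ) {e : SmallExtension K} (αB : d.e.B ⟶ e.B)
    (αA : d.e.A ⟶ e.A) (hc : αB ≫ e.π = d.e.π ≫ αA) : LiftingProblem φ :=
  ⟨e, F.map αA d.a, G.map αB d.β, SmallExtension.rel_compat φ αB αA hc d.a d.β d.h⟩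

/-- The relations satisfied by contractions of obstructions in every relative obstruction
theory. -/
inductive Relation : (FormalContraction φ →₀ K) → Prop
  | add (d : LiftingProblem φ) (l m : Module.Dual K d.e.J) :
      Relation (Finsupp.single ⟨d, l + m⟩ 1 -
        (Finsupp.single ⟨d, l⟩ 1 + Finsupp.single ⟨d, m⟩ 1))
  | smul (d : LiftingProblem φ) (c : K) (l : Module.Dual K d.e.J) :
      Relation (Finsupp.single ⟨d, c • l⟩ 1 - c • Finsupp.single ⟨d, l⟩ 1)
  | lifts (d : LiftingProblem φ) (l : Module.Dual K d.e.J)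
      (hd : ∃ b : F.obj d.e.B, F.map d.e.π b = d.a ∧ φ.app d.e.B b = d.β) :
      Relation (Finsupp.single ⟨d, l⟩ 1)
  | push (d : LiftingProblem φ) {e : SmallExtension K} (αB : d.e.B ⟶ e.B)
      (αA : d.e.A ⟶ e.A) (hc : αB ≫ e.π = d.e.π ≫ αA) (l : Module.Dual K e.J) :
      Relation (Finsupp.single ⟨d.push αB αA hc, l⟩ 1 -
        Finsupp.single ⟨d, l.comp (SmallExtension.kerMap αB αA hc)⟩ 1)

/-- The universal obstruction space, in a large universe. -/
abbrev LargeSpace : Type (u + 1) :=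
  (FormalContraction φ →₀ K) ⧸ Submodule.span K {x | Relation φ x}

variable {φ}

lemma mk_eq_of_relation {x y : FormalContraction φ →₀ K} (h : Relation φ (x - y)) :
    (Submodule.Quotient.mk x : LargeSpace φ) = Submodule.Quotient.mk y :=
  (Submodule.Quotient.eq _).2 (Submodule.subset_span h)

/-- The contractions of the universal obstruction of a lifting problem. -/
noncomputable def largeContraction (d : LiftingProblem φ) :
    Module.Dual K d.e.J →ₗ[K] LargeSpace φ where
  toFun l := Submodule.Quotient.mk (Finsupp.single ⟨d, l⟩ 1)
  map_add' l m := mk_eq_of_relation (.add d l m)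
  map_smul' c l := mk_eq_of_relation (.smul d c l)

lemma largeContraction_eq_zero (d : LiftingProblem φ)
    (hd : ∃ b : F.obj d.e.B, F.map d.e.π b = d.a ∧ φ.app d.e.B b = d.β) :
    largeContraction d = 0 :=
  LinearMap.ext fun l =>
    (Submodule.Quotient.mk_eq_zero _).2 (Submodule.subset_span (.lifts d l hd))

lemma largeContraction_push (d : LiftingProblem φ) {e : SmallExtension K} (αB : d.e.B ⟶ e.B)
    (αA : d.e.A ⟶ e.A) (hc : αB ≫ e.π = d.e.π ≫ αA) (l : Module.Dual K e.J) :
    largeContraction (d.push αB αA hc) l =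
      largeContraction d (l.comp (SmallExtension.kerMap αB αA hc)) :=
  mk_eq_of_relation (.push d αB αA hc l)

lemma largeSpace_hom_ext {W : Type*} [AddCommGroup W] [Module K W]
    {f g : LargeSpace φ →ₗ[K] W}
    (h : ∀ d l, f (largeContraction d l) = g (largeContraction d l)) : f = g := by
  refine Submodule.linearMap_qext _ (Finsupp.lhom_ext' fun ⟨d, l⟩ => LinearMap.ext_ring ?_)
  exact h d l

/-- The linear map from the large universal obstruction space to the space of any relative
obstruction theory. -/
noncomputable def largeLift (T : RelObstructionTheory φ) : LargeSpace φ →ₗ[K] T.V :=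
  Submodule.liftQ _ (Finsupp.linearCombination K fun x : FormalContraction φ =>
      contract x.2 (T.ob x.1.e x.1.a x.1.β x.1.h)) <| by
    rw [Submodule.span_le]
    rintro x (⟨d, l, m⟩ | ⟨d, c, l⟩ | ⟨d, l, hd⟩ | ⟨d, αB, αA, hc, l⟩)
    · simp
    · simp
    · simp [T.ob_eq_zero_of_lifts _ _ _ d.h hd]
    · have := T.base_change _ _ αB αA hc d.a d.β d.h
      simp [LiftingProblem.push, this, contract_lTensor]

lemma largeLift_largeContraction (T : RelObstructionTheory φ) (d : LiftingProblem φ)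
    (l : Module.Dual K d.e.J) :
    largeLift T (largeContraction d l) = contract l (T.ob d.e d.a d.β d.h) := by
  refine (Submodule.liftQ_apply _ _ _).trans ?_
  simp

variable (φ) in
/-- Lifting problems between presented algebras, with a linear form on the kernel. -/
structure PresentedContraction : Type u where
  B : ArtinAlg.Presentation K
  A : ArtinAlg.Presentation K
  π : B.toArtinAlg ⟶ A.toArtinAlg
  surj : Function.Surjective π
  small : ∀ x : B.toArtinAlg, π x = 0 →
    ∀ y ∈ IsLocalRing.maximalIdeal B.toArtinAlg.carrier, y * x = 0
  a : F.obj A.toArtinAlg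
  β : G.obj B.toArtinAlg
  h : G.map π β = φ.app A.toArtinAlg a
  l : Module.Dual K (SmallExtension.mk B.toArtinAlg A.toArtinAlg π surj small).J

/-- The class in the large space of a presented lifting problem. -/
noncomputable def PresentedContraction.toLargeSpace (x : PresentedContraction φ) :
    LargeSpace φ :=
  largeContraction ⟨⟨x.B.toArtinAlg, x.A.toArtinAlg, x.π, x.surj, x.small⟩, x.a, x.β, x.h⟩ x.l

lemma exists_presentedContraction (d : LiftingProblem φ) (l : Module.Dual K d.e.J) :
    ∃ x : PresentedContraction φ, x.toLargeSpace = largeContraction d l := by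
  obtain ⟨B, ⟨iB⟩⟩ := d.e.B.exists_presentation
  obtain ⟨A, ⟨iA⟩⟩ := d.e.A.exists_presentation
  let e' := d.e.ofIso iB iA
  have hc : (iB.hom : d.e.B ⟶ e'.B) ≫ e'.π = d.e.π ≫ iA.hom := by
    simp [e', SmallExtension.ofIso]
  have hc' : (iB.inv : e'.B ⟶ d.e.B) ≫ d.e.π = e'.π ≫ iA.inv := by
    simp [e', SmallExtension.ofIso]
  let d' := d.push (e := e') iB.hom iA.hom hc
  refine ⟨⟨B, A, e'.π, e'.surj, e'.small, d'.a, d'.β, d'.h,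
    l.comp (SmallExtension.kerMap iB.inv iA.inv hc')⟩, ?_⟩
  refine (largeContraction_push d (e := e') iB.hom iA.hom hc _).trans ?_
  congr 1
  refine LinearMap.ext fun x => congrArg l (Subtype.ext ?_)
  exact DFunLike.congr_fun iB.hom_inv_id x.1

instance small_largeSpace : Small.{u} (LargeSpace φ) := by
  refine small_of_surjective
    (f := Finsupp.linearCombination K (PresentedContraction.toLargeSpace (φ := φ))) ?_
  rw [← LinearMap.range_eq_top, eq_top_iff]
  rintro y -
  obtain ⟨y, rfl⟩ := Submodule.Quotient.mk_surjective _ y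
  induction y using Finsupp.induction_linear with
  | zero => exact zero_mem _
  | add x y hx hy => exact add_mem hx hy
  | single x c =>
    obtain ⟨p, hp⟩ := exists_presentedContraction x.1 x.2
    refine ⟨Finsupp.single p c, ?_⟩
    rw [Finsupp.linearCombination_single, hp]
    change c • Submodule.Quotient.mk _ = _
    rw [← Submodule.Quotient.mk_smul]
    simp

/-- The contractions of the universal obstruction of a lifting problem, in the small model. -/
noncomputable def universalContraction (d : LiftingProblem φ) :
    Module.Dual K d.e.J →ₗ[K] Shrink.{u} (LargeSpace φ) :=
  (Shrink.linearEquiv.{u} K (LargeSpace φ)).symm.toLinearMap.comp (largeContraction d)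

variable (φ) in
/-- The universal relative obstruction theory. -/
noncomputable def universal : RelObstructionTheory φ where
  V := Shrink.{u} (LargeSpace φ)
  ob e a β h := ofContractions (universalContraction ⟨e, a, β, h⟩)
  ob_eq_zero_of_lifts e a β h hl := by
    simp [universalContraction, largeContraction_eq_zero ⟨e, a, β, h⟩ hl, ofContractions]
  base_change e₁ e₂ αB αA hc a β h := by
    refine contract_ext fun l => ?_
    rw [contract_lTensor, contract_ofContractions, contract_ofContractions]
    exact congrArg (Shrink.linearEquiv.{u} K (LargeSpace φ)).symm
      (largeContraction_push ⟨e₁, a, β, h⟩ αB αA hc l)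

lemma isUniversal_universal : (universal φ).IsUniversal := by
  intro T
  let s := Shrink.linearEquiv.{u} K (LargeSpace φ)
  have key (d : LiftingProblem φ) (l : Module.Dual K d.e.J) :
      contract l ((universal φ).ob d.e d.a d.β d.h) = s.symm (largeContraction d l) :=
    contract_ofContractions l (universalContraction d)
  refine ⟨(largeLift T).comp s.toLinearMap, fun e a β h => contract_ext fun l => ?_,
    fun ψ hψ => ?_⟩
  · rw [contract_rTensor, key ⟨e, a, β, h⟩ l]
    refine (largeLift_largeContraction T ⟨e, a, β, h⟩ l).symm.trans ?_
    exact congrArg (largeLift T) (s.apply_symm_apply _).symm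
  · have hs : ψ.comp s.symm.toLinearMap = largeLift T := by
      refine largeSpace_hom_ext fun d l => ?_
      rw [largeLift_largeContraction, hψ d.e d.a d.β d.h, contract_rTensor, key]
      rfl
    rw [← hs]
    exact LinearMap.ext fun x => congrArg ψ (s.symm_apply_apply x).symm

lemma IsMorphism.comp {T₁ T₂ T₃ : RelObstructionTheory φ} {f : T₁.V →ₗ[K] T₂.V}
    {g : T₂.V →ₗ[K] T₃.V} (hf : T₁.IsMorphism T₂ f) (hg : T₂.IsMorphism T₃ g) :
    T₁.IsMorphism T₃ (g.comp f) := fun e a β h => by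
  rw [hg, hf, LinearMap.rTensor_comp_apply]

lemma isMorphism_id (T : RelObstructionTheory φ) : T.IsMorphism T LinearMap.id :=
  fun e a β h => by rw [LinearMap.rTensor_id_apply]

end RelObstructionTheory

/-- Every morphism `φ : F → G` of deformation functors admits a universal
relative obstruction theory, and it is unique up to isomorphism of relative obstruction
theories. -/
theorem exists_universal_relObstructionTheory {K : Type u} [Field K]
    {F G : ArtinAlg K ⥤ Type u} (hF : IsDeformationFunctor F) (hG : IsDeformationFunctor G)
    (φ : F ⟶ G) :
    (∃ ROT : RelObstructionTheory φ, ROT.IsUniversal) ∧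
    (∀ ROT₁ ROT₂ : RelObstructionTheory φ, ROT₁.IsUniversal → ROT₂.IsUniversal →
      ∃ ψ : ROT₁.V ≃ₗ[K] ROT₂.V,
        RelObstructionTheory.IsMorphism ROT₁ ROT₂ ψ.toLinearMap) := by
  refine ⟨⟨.universal φ, RelObstructionTheory.isUniversal_universal⟩, fun T₁ T₂ h₁ h₂ => ?_⟩
  obtain ⟨f, hf, -⟩ := h₁ T₂
  obtain ⟨g, hg, -⟩ := h₂ T₁
  exact ⟨LinearEquiv.ofLinearMap f g ((h₂ T₂).unique (hg.comp hf) T₂.isMorphism_id)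
    ((h₁ T₁).unique (hf.comp hg) T₁.isMorphism_id), hf⟩
end

section
/- Let φ : F → G be a morphism of deformation functors over Art_K, let (V, v_e) be an obstruction theory for F and (W, w_e) an obstruction theory for G, and let φ' : V → W be a K-linear map compatible with φ, i.e. for every small extension e : 0 → J → B → A → 0 and every a ∈ F(A) one has w_e(φ_A(a)) = (φ' ⊗ id_J)(v_e(a)). If (V, v_e) is complete, φ' : V → W is injective, and the tangent map t_φ : F(K[ε]) → G(K[ε]) is surjective, then φ is smooth. -/
open CategoryTheory

universe u

open TrivSqZeroExt in
/-- A trivial square-zero extension `K ⊕ M` of a field `K` by a finite-dimensional vector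
space `M`, as an object of `Art_K`. -/
noncomputable def ArtinAlg.tszeObj (K : Type u) [Field K] (M : Type u) [AddCommGroup M]
    [Module K M] [Module Kᵐᵒᵖ M] [IsCentralScalar K M] [Module.Finite K M] :
    ArtinAlg K :=
  letI instArt : IsArtinianRing (TrivSqZeroExt K M) := by
    have : Module.Finite K (TrivSqZeroExt K M) :=
      inferInstanceAs (Module.Finite K (K × M))
    exact IsArtinianRing.of_finite K (TrivSqZeroExt K M)
  letI instLoc : IsLocalRing (TrivSqZeroExt K M) := by
    refine IsLocalRing.of_isUnit_or_isUnit_one_sub_self fun a => ?_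
    rcases eq_or_ne a.fst 0 with h | h
    · right
      rw [isUnit_iff_isUnit_fst]
      simp [h]
    · left
      rw [isUnit_iff_isUnit_fst]
      exact h.isUnit
  { carrier := TrivSqZeroExt K M
    residue_bij := by
      constructor
      · exact RingHom.injective _
      · intro y
        obtain ⟨x, hx⟩ := Ideal.Quotient.mk_surjective
          (I := IsLocalRing.maximalIdeal (TrivSqZeroExt K M)) y
        refine ⟨x.fst, ?_⟩
        have hmem : (inr x.snd : TrivSqZeroExt K M) ∈
            IsLocalRing.maximalIdeal (TrivSqZeroExt K M) := by
          rw [IsLocalRing.mem_maximalIdeal, mem_nonunits_iff, isUnit_iff_isUnit_fst, fst_inr]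
          exact not_isUnit_zero
        have h0 : (IsLocalRing.residue (TrivSqZeroExt K M)) (inr x.snd) = 0 :=
          Ideal.Quotient.eq_zero_iff_mem.2 hmem
        have hxeq : (algebraMap K (TrivSqZeroExt K M)) x.fst = x - inr x.snd := by
          rw [TrivSqZeroExt.algebraMap_eq_inl]
          exact eq_sub_of_add_eq (inl_fst_add_inr_snd_eq x)
        show (IsLocalRing.residue (TrivSqZeroExt K M)) ((algebraMap K _) x.fst) = y
        rw [hxeq, map_sub, h0, sub_zero]
        exact hx }
/-- The ring of dual numbers `K[ε]` as an object of `Art_K`. -/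
noncomputable def ArtinAlg.eps (K : Type u) [Field K] : ArtinAlg K :=
  ArtinAlg.tszeObj K K

/-- The ring `K[ε₁, ε₂]/(ε₁, ε₂)²`, i.e. the fiber product `K[ε] ×_K K[ε]`, as an object of
`Art_K`. -/
noncomputable def ArtinAlg.epsSq (K : Type u) [Field K] : ArtinAlg K :=
  ArtinAlg.tszeObj K (K × K)

/-- The first projection `K[ε₁, ε₂]/(ε₁, ε₂)² → K[ε]`, `ε₁ ↦ ε, ε₂ ↦ 0`. -/
noncomputable def ArtinAlg.pr1 (K : Type u) [Field K] : ArtinAlg.epsSq K ⟶ ArtinAlg.eps K :=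
  TrivSqZeroExt.map (LinearMap.fst K K K)

/-- The second projection `K[ε₁, ε₂]/(ε₁, ε₂)² → K[ε]`, `ε₁ ↦ 0, ε₂ ↦ ε`. -/
noncomputable def ArtinAlg.pr2 (K : Type u) [Field K] : ArtinAlg.epsSq K ⟶ ArtinAlg.eps K :=
  TrivSqZeroExt.map (LinearMap.snd K K K)

/-- The addition map `K[ε₁, ε₂]/(ε₁, ε₂)² → K[ε]` sending both `ε₁` and `ε₂` to `ε`. -/
noncomputable def ArtinAlg.addMap (K : Type u) [Field K] :
    ArtinAlg.epsSq K ⟶ ArtinAlg.eps K :=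
  TrivSqZeroExt.map (LinearMap.fst K K K + LinearMap.snd K K K)

/-- The scaling map `K[ε] → K[ε]`, `ε ↦ a • ε`. -/
noncomputable def ArtinAlg.scaleMap (K : Type u) [Field K] (a : K) :
    ArtinAlg.eps K ⟶ ArtinAlg.eps K :=
  TrivSqZeroExt.map (a • LinearMap.id)

/-- The unit map `K → K[ε]`. -/
noncomputable def ArtinAlg.unitMap (K : Type u) [Field K] :
    ArtinAlg.self K ⟶ ArtinAlg.eps K :=
  Algebra.ofId K (DualNumber K)

/-- The projection `K[ε] → K`, `ε ↦ 0`. -/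
noncomputable def ArtinAlg.projMap (K : Type u) [Field K] :
    ArtinAlg.eps K ⟶ ArtinAlg.self K :=
  TrivSqZeroExt.fstHom K K K

namespace ArtinAlg

variable {K : Type u} [Field K]

/-- The augmentation `A → A / m_A = K`. -/
noncomputable def augmentation (A : ArtinAlg K) : A.carrier →ₐ[K] K :=
  ((AlgEquiv.ofBijective (IsScalarTower.toAlgHom K K (IsLocalRing.ResidueField A.carrier))
    A.residue_bij).symm : IsLocalRing.ResidueField A.carrier →ₐ[K] K).comp
    (IsScalarTower.toAlgHom K A.carrier (IsLocalRing.ResidueField A.carrier))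

theorem augmentation_eq_zero_iff (A : ArtinAlg K) (a : A) :
    A.augmentation a = 0 ↔ a ∈ IsLocalRing.maximalIdeal A.carrier := by
  rw [← IsLocalRing.residue_eq_zero_iff]
  exact EmbeddingLike.map_eq_zero_iff (f := (AlgEquiv.ofBijective
    (IsScalarTower.toAlgHom K K (IsLocalRing.ResidueField A.carrier)) A.residue_bij).symm)

theorem sub_algebraMap_augmentation_mem (A : ArtinAlg K) (a : A) :
    a - algebraMap K A.carrier (A.augmentation a) ∈ IsLocalRing.maximalIdeal A.carrier := by
  rw [← augmentation_eq_zero_iff, map_sub, AlgHom.commutes]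
  exact sub_self _

/-- Elements killed by the maximal ideal are acted on through the augmentation. -/
theorem mul_eq_augmentation_smul (A : ArtinAlg K) {x : A}
    (hx : ∀ y ∈ IsLocalRing.maximalIdeal A.carrier, y * x = 0) (a : A) :
    a * x = A.augmentation a • x := by
  have h := hx _ (A.sub_algebraMap_augmentation_mem a)
  rw [sub_mul, sub_eq_zero] at h
  rw [h, Algebra.smul_def]

/-- A local Artinian `K`-algebra in which every element is congruent to a scalar modulo the
maximal ideal, as an object of `Art_K`. -/
def ofSubMem (R : Type u) [CommRing R] [Algebra K R] [IsArtinianRing R] [IsLocalRing R]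
    (h : ∀ r : R, ∃ c : K, r - algebraMap K R c ∈ IsLocalRing.maximalIdeal R) : ArtinAlg K where
  carrier := R
  residue_bij := by
    refine ⟨RingHom.injective _, fun y => ?_⟩
    obtain ⟨r, rfl⟩ := IsLocalRing.residue_surjective y
    obtain ⟨c, hc⟩ := h r
    refine ⟨c, ?_⟩
    rw [← IsLocalRing.residue_eq_zero_iff, map_sub, sub_eq_zero] at hc
    exact hc.symm

/-- The quotient of an object of `Art_K` by a proper ideal. -/
def quotient (A : ArtinAlg K) (I : Ideal A.carrier) (hI : I ≠ ⊤) : ArtinAlg K :=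
  haveI : Nontrivial (A.carrier ⧸ I) := Ideal.Quotient.nontrivial_iff.2 hI
  haveI : IsLocalRing (A.carrier ⧸ I) :=
    .of_surjective' (Ideal.Quotient.mk I) Ideal.Quotient.mk_surjective
  ofSubMem (A.carrier ⧸ I) fun r => by
    obtain ⟨a, rfl⟩ := Ideal.Quotient.mk_surjective r
    refine ⟨A.augmentation a, ?_⟩
    have h := A.sub_algebraMap_augmentation_mem a
    rw [IsLocalRing.mem_maximalIdeal, mem_nonunits_iff] at h ⊢
    contrapose! h
    have : IsLocalHom (Ideal.Quotient.mk I) :=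
      IsLocalHom.of_surjective _ Ideal.Quotient.mk_surjective
    exact isUnit_of_map_unit (Ideal.Quotient.mk I) _ h

/-- The trivial square-zero extension `A ⊕ J` of `A` by an ideal `J`. -/
noncomputable def trivExt (A : ArtinAlg K) (J : Ideal A.carrier) : ArtinAlg K :=
  haveI : Module.Finite A.carrier (TrivSqZeroExt A.carrier J) :=
    inferInstanceAs (Module.Finite A.carrier (A.carrier × J))
  haveI : IsScalarTower A.carrier (TrivSqZeroExt A.carrier J) (TrivSqZeroExt A.carrier J) :=
    ⟨fun a x y => by ext <;> simp [mul_assoc, mul_left_comm]⟩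
  haveI : IsArtinianRing (TrivSqZeroExt A.carrier J) :=
    IsArtinianRing.of_finite A.carrier _
  haveI : IsLocalRing (TrivSqZeroExt A.carrier J) :=
    .of_isUnit_or_isUnit_one_sub_self fun a => by
      simpa only [TrivSqZeroExt.isUnit_iff_isUnit_fst, TrivSqZeroExt.fst_sub,
        TrivSqZeroExt.fst_one] using
        IsLocalRing.isUnit_or_isUnit_one_sub_self a.fst
  ofSubMem (TrivSqZeroExt A.carrier J) fun r => ⟨A.augmentation r.fst, by
    rw [IsLocalRing.mem_maximalIdeal, mem_nonunits_iff, TrivSqZeroExt.isUnit_iff_isUnit_fst]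
    exact A.sub_algebraMap_augmentation_mem r.fst⟩

/-- A nonzero ideal `I` has a subideal `I'` containing `m_A I` such that `I / I'` is a line. -/
theorem exists_lt_of_ne_bot (A : ArtinAlg K) {I : Ideal A.carrier} (hI : I ≠ ⊥) :
    ∃ I' < I, (∀ y ∈ IsLocalRing.maximalIdeal A.carrier, ∀ x ∈ I, y * x ∈ I') ∧
      ∃ j ∈ I, j ∉ I' ∧ ∀ x ∈ I, ∃ c : K, x - c • j ∈ I' := by
  obtain ⟨I', -, hcov⟩ := exists_le_covBy_of_lt (bot_lt_iff_ne_bot.2 hI)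
  have hm : IsLocalRing.maximalIdeal A.carrier • I ≤ I' := by
    rcases hcov.eq_or_eq (c := I' ⊔ IsLocalRing.maximalIdeal A.carrier • I) le_sup_left
      (sup_le hcov.le Submodule.smul_le_right) with h | h
    · exact sup_eq_left.1 h
    · exact absurd (Submodule.le_of_le_smul_of_le_jacobson_bot (IsNoetherian.noetherian I)
        (IsLocalRing.maximalIdeal_le_jacobson ⊥) h.ge) hcov.lt.not_ge
  have hm' : ∀ y ∈ IsLocalRing.maximalIdeal A.carrier, ∀ x ∈ I, y * x ∈ I' :=
    fun y hy x hx => hm (Submodule.smul_mem_smul hy hx)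
  obtain ⟨j, hj, hj'⟩ := SetLike.exists_of_lt hcov.lt
  refine ⟨I', hcov.lt, hm', j, hj, hj', fun x hx => ?_⟩
  have hsup : I' ⊔ Ideal.span {j} = I :=
    (hcov.eq_or_eq le_sup_left
      (sup_le hcov.le ((Ideal.span_singleton_le_iff_mem I).2 hj))).resolve_left fun h =>
        hj' (h ▸ Ideal.mem_sup_right (Ideal.mem_span_singleton_self j))
  rw [← hsup] at hx
  obtain ⟨i, hi, z, hz, rfl⟩ := Submodule.mem_sup.1 hx
  obtain ⟨a, rfl⟩ := Ideal.mem_span_singleton'.1 hz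
  refine ⟨A.augmentation a, ?_⟩
  have := I'.add_mem hi (hm' _ (A.sub_algebraMap_augmentation_mem a) j hj)
  rwa [sub_mul, ← Algebra.smul_def, ← add_sub_assoc] at this

end ArtinAlg

section

variable {K : Type u} [Field K] {F G : ArtinAlg K ⥤ Type u}

/-- For a small extension `B → A`, an element of `F(A)` whose image in `G(A)` lifts to
`G(B)` lifts to `F(B)`. -/
theorem ObstructionTheory.Complete.exists_lift_of_map_lifts {φ : F ⟶ G}
    {OTF : ObstructionTheory F} (hcomplete : OTF.Complete) (OTG : ObstructionTheory G)
    {φ' : OTF.V →ₗ[K] OTG.V}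
    (hcompat : ∀ (e : SmallExtension K) (a : F.obj e.A),
      OTG.ob e (φ.app e.A a) = LinearMap.rTensor (↥e.J) φ' (OTF.ob e a))
    (hinj : Function.Injective φ') (e : SmallExtension K) (gb : G.obj e.B) (fa : F.obj e.A)
    (h : G.map e.π gb = φ.app e.A fa) : ∃ fb : F.obj e.B, F.map e.π fb = fa := by
  refine hcomplete e fa (Module.Flat.rTensor_preserves_injective_linearMap φ' hinj ?_)
  rw [← hcompat, map_zero]
  exact OTG.ob_eq_zero_of_lifts e _ ⟨gb, h⟩

/-- If the kernel of a small extension `B → A` is a line, surjectivity on tangent spaces allows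
one to correct a lift to `F(B)` so that it maps to a prescribed element of `G(B)`. -/
theorem exists_lift_of_tangent_surjective (hF : IsDeformationFunctor F)
    (hG : IsDeformationFunctor G) (φ : F ⟶ G)
    (hsurj : Function.Surjective (φ.app (ArtinAlg.eps K))) (e : SmallExtension K) (j : e.B)
    (hj : e.π j = 0) (hj0 : j ≠ 0) (hspan : ∀ x : e.B, e.π x = 0 → ∃ c : K, c • j = x)
    (gb : G.obj e.B) (fb' : F.obj e.B) (h : G.map e.π gb = G.map e.π (φ.app e.B fb')) :
    ∃ fb : F.obj e.B, φ.app e.B fb = gb ∧ F.map e.π fb = F.map e.π fb' := by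
  let J : Ideal e.B.carrier := RingHom.ker (ArtinAlg.Hom.toAlgHom e.π)
  have hJ (x : J) : e.π x.1 = 0 := x.2
  have hmul (b : e.B) (x : J) : b * x.1 = e.B.augmentation b • x.1 :=
    e.B.mul_eq_augmentation_smul (e.small _ (hJ x)) b
  have hJmem (x : J) : x.1 ∈ IsLocalRing.maximalIdeal e.B.carrier := by
    rw [IsLocalRing.mem_maximalIdeal, mem_nonunits_iff]
    intro hu
    have := hu.map (ArtinAlg.Hom.toAlgHom e.π)
    rw [show ArtinAlg.Hom.toAlgHom e.π x.1 = 0 from x.2] at this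
    exact not_isUnit_zero this
  let coord : J ≃ₗ[K] K := (LinearEquiv.ofBijective (LinearMap.toSpanSingleton K J ⟨j, hj⟩) (by
    constructor
    · intro c d hcd
      exact smul_left_injective K hj0 (congrArg Subtype.val hcd)
    · intro x
      obtain ⟨c, hc⟩ := hspan x.1 (hJ x)
      exact ⟨c, Subtype.ext hc⟩)).symm
  have hcoord (b : e.B) (x : J) : coord (b • x) = e.B.augmentation b * coord x := by
    rw [← smul_eq_mul, ← map_smul]
    exact congrArg coord (Subtype.ext (hmul b x))
  let p : e.B.trivExt J ⟶ e.B := TrivSqZeroExt.fstHom K e.B.carrier J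
  let r : e.B.trivExt J ⟶ e.B := TrivSqZeroExt.lift (AlgHom.id K e.B.carrier)
    (J.subtype.restrictScalars K) (fun x y => e.small _ (hJ y) _ (hJmem x)) (fun b x => rfl)
    (fun b x => rfl)
  let q' : TrivSqZeroExt e.B.carrier J →ₐ[K] TrivSqZeroExt K K := TrivSqZeroExt.lift
    ((TrivSqZeroExt.inlAlgHom K K K).comp e.B.augmentation)
    ((TrivSqZeroExt.inrHom K K).comp coord.toLinearMap)
    (fun x y => TrivSqZeroExt.inr_mul_inr _ _ _)
    (fun b x => by refine TrivSqZeroExt.ext ?_ ?_ <;> simp [hcoord, mul_comm])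
    (fun b x => by refine TrivSqZeroExt.ext ?_ ?_ <;> simp [hcoord, mul_comm])
  let q : e.B.trivExt J ⟶ ArtinAlg.eps K := q'
  have hr (d : e.B.trivExt J) :
      r d = TrivSqZeroExt.fst d + (show J from TrivSqZeroExt.snd d).1 := rfl
  have hq_fst (d : TrivSqZeroExt e.B.carrier J) : (q' d).fst = e.B.augmentation d.fst :=
    add_zero (e.B.augmentation d.fst)
  have hq_snd (d : TrivSqZeroExt e.B.carrier J) : (q' d).snd = coord d.snd :=
    zero_add (coord d.snd)
  have hcone : IsFiberProductCone e.π e.π p r := by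
    refine ⟨fun d => ?_, fun d₁ d₂ h₁ h₂ => ?_, fun b c hbc => ?_⟩
    · rw [hr, map_add, hJ, add_zero]
      rfl
    · have hfst : TrivSqZeroExt.fst d₁ = TrivSqZeroExt.fst d₂ := h₁
      rw [hr, hr, hfst] at h₂
      exact TrivSqZeroExt.ext hfst (Subtype.ext (add_left_cancel h₂))
    · have hx : c - b ∈ J := by
        change e.π (c - b) = 0
        rw [map_sub, hbc, sub_self]
      exact ⟨(b, ⟨c - b, hx⟩), rfl, add_sub_cancel b c⟩
  let aug : e.B ⟶ ArtinAlg.self K := e.B.augmentation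
  have hcone' : IsFiberProductCone aug (ArtinAlg.projMap K) p q := by
    refine ⟨fun d => ?_, fun d₁ d₂ h₁ h₂ => ?_, fun b c hbc => ?_⟩
    · exact (hq_fst d).symm
    · exact TrivSqZeroExt.ext h₁ (coord.injective
        ((hq_snd d₁).symm.trans ((congrArg TrivSqZeroExt.snd h₂).trans (hq_snd d₂))))
    · exact ⟨(b, coord.symm (TrivSqZeroExt.snd c)), rfl, TrivSqZeroExt.ext
        ((hq_fst _).trans hbc) ((hq_snd _).trans (coord.apply_symm_apply _))⟩
  obtain ⟨d, hd₁, hd₂⟩ := hG.eta_surjective e.π e.π p r hcone e.surj (φ.app e.B fb') gb h.symm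
  obtain ⟨s, hs⟩ := hsurj (G.map q d)
  obtain ⟨fd, ⟨hfd₁, hfd₂⟩, -⟩ := hF.eta_bijective _ _ p q hcone' fb' s
    (hF.subsingleton_pt.elim _ _)
  have hfd : φ.app _ fd = d := by
    refine (hG.eta_bijective _ _ p q hcone' (φ.app e.B fb') (G.map q d)
      (hG.subsingleton_pt.elim _ _)).unique ⟨?_, ?_⟩ ⟨hd₁, rfl⟩
    · rw [← NatTrans.naturality_apply, hfd₁]
    · rw [← NatTrans.naturality_apply, hfd₂, hs]
  refine ⟨F.map r fd, ?_, ?_⟩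
  · rw [NatTrans.naturality_apply, hfd, hd₂]
  · rw [← hfd₁, ← Functor.map_comp_apply, ← Functor.map_comp_apply]
    have hcomm : r ≫ e.π = p ≫ e.π := DFunLike.ext _ _ fun d => (hcone.comm d).symm
    rw [hcomm]

/-- To check smoothness it suffices to lift along small extensions whose kernel is a line. -/
theorem isSmoothMorphism_of_small (φ : F ⟶ G)
    (H : ∀ (e : SmallExtension K) (j : e.B), e.π j = 0 → j ≠ 0 →
      (∀ x : e.B, e.π x = 0 → ∃ c : K, c • j = x) →
      ∀ (gb : G.obj e.B) (fa : F.obj e.A), G.map e.π gb = φ.app e.A fa →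
        ∃ fb : F.obj e.B, φ.app e.B fb = gb ∧ F.map e.π fb = fa) :
    IsSmoothMorphism φ := by
  intro B A f hf gb fa h
  induction hI : RingHom.ker (ArtinAlg.Hom.toAlgHom f) using WellFoundedLT.induction
    generalizing A with
  | ind I ih =>
  by_cases hbot : I = ⊥
  · have hinj : Function.Injective (ArtinAlg.Hom.toAlgHom f) :=
      (RingHom.injective_iff_ker_eq_bot _).2 (hI.trans hbot)
    let E := AlgEquiv.ofBijective (ArtinAlg.Hom.toAlgHom f) ⟨hinj, hf⟩
    let g : A ⟶ B := (E.symm : A.carrier →ₐ[K] B.carrier)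
    have hfg : f ≫ g = 𝟙 B := DFunLike.ext _ _ fun b => E.symm_apply_apply b
    have hgf : g ≫ f = 𝟙 A := DFunLike.ext _ _ fun a => E.apply_symm_apply a
    refine ⟨F.map g fa, ?_, ?_⟩
    · rw [NatTrans.naturality_apply, ← h, ← Functor.map_comp_apply, hfg,
        Functor.map_id_apply]
    · rw [← Functor.map_comp_apply, hgf, Functor.map_id_apply]
  · obtain ⟨I', hlt, hm, j, hjI, hjI', hspan⟩ := B.exists_lt_of_ne_bot hbot
    let f' : B ⟶ B.quotient I' hlt.ne_top := Ideal.Quotient.mkₐ K I'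
    have hf' : Function.Surjective f' := Ideal.Quotient.mk_surjective
    have hf'0 (x : B) : f' x = 0 ↔ x ∈ I' := Ideal.Quotient.eq_zero_iff_mem
    have hf0 (x : B) : f x = 0 ↔ x ∈ I := by
      rw [← hI]
      rfl
    let g : B.quotient I' hlt.ne_top ⟶ A :=
      Ideal.Quotient.liftₐ I' (ArtinAlg.Hom.toAlgHom f) fun x hx => (hf0 x).2 (hlt.le hx)
    let e : SmallExtension K :=
      { B := B.quotient I' hlt.ne_top
        A := A
        π := g
        surj := fun a => (hf a).imp' f' fun b hb => hb
        small := fun x hx y hy => by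
          obtain ⟨x, rfl⟩ := hf' x
          obtain ⟨y, rfl⟩ := hf' y
          rw [← map_mul, hf'0]
          refine hm y ?_ x ((hf0 x).1 hx)
          rw [IsLocalRing.mem_maximalIdeal, mem_nonunits_iff] at hy ⊢
          exact fun hu => hy (hu.map f') }
    obtain ⟨fa', hfa', rfl⟩ := H e (f' j) ((hf0 j).2 hjI) (mt (hf'0 j).1 hjI')
      (fun x hx => by
        obtain ⟨x, rfl⟩ := hf' x
        obtain ⟨c, hc⟩ := hspan x ((hf0 x).1 hx)
        refine ⟨c, ?_⟩
        rw [← hf'0, map_sub, sub_eq_zero, map_smul] at hc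
        exact hc.symm)
      (G.map f' gb) fa (by rw [← Functor.map_comp_apply]; exact h)
    obtain ⟨fb, hfb, rfl⟩ := ih I' hlt _ f' hf' fa' hfa'.symm
      (Ideal.ext fun x => hf'0 x)
    exact ⟨fb, hfb, Functor.map_comp_apply F f' g fb⟩

end

/-- Let `φ : F → G` be a morphism of deformation functors, `(V, v_e)` a
complete obstruction theory for `F`, `(W, w_e)` an obstruction theory for `G`, and
`φ' : V → W` a compatible injective linear map. If the tangent map
`t_φ : F(K[ε]) → G(K[ε])` is surjective then `φ` is smooth. -/
theorem isSmoothMorphism_of_complete_injective_of_tangent_surjective {K : Type u} [Field K]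
    {F G : ArtinAlg K ⥤ Type u} (hF : IsDeformationFunctor F) (hG : IsDeformationFunctor G)
    (φ : F ⟶ G) (OTF : ObstructionTheory F) (OTG : ObstructionTheory G)
    (φ' : OTF.V →ₗ[K] OTG.V)
    (hcompat : ∀ (e : SmallExtension K) (a : F.obj e.A),
      OTG.ob e (φ.app e.A a) = LinearMap.rTensor (↥e.J) φ' (OTF.ob e a))
    (hcomplete : OTF.Complete) (hinj : Function.Injective φ')
    (hsurj : Function.Surjective (φ.app (ArtinAlg.eps K))) :
    IsSmoothMorphism φ := by
  refine isSmoothMorphism_of_small φ fun e j hj hj0 hspan gb fa h => ?_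
  obtain ⟨fb', rfl⟩ := hcomplete.exists_lift_of_map_lifts OTG hcompat hinj e gb fa h
  exact exists_lift_of_tangent_surjective hF hG φ hsurj e j hj hj0 hspan gb fb'
    (h.trans (NatTrans.naturality_apply φ e.π fb'))
end
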